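/- Suppose a monoid M satisfies x² ≈ x³, x²y ≈ xyx, and x²y² ≈ y²x² (the defining identities of the variety E). Let u ≈ v be an identity with sim(u) = sim(v), mul(u) = mul(v), all simple letters appearing in the same order in u and v, and such that for each letter x, the set of simple letters preceding the first occurrence of x is the same in u as in v (i.e., h₁⁰(u,x) = h₁⁰(v,x) for all x). Then M satisfies u ≈ v. -/

import Mathlib

/-!
In such a monoid a square `x²` absorbs every later occurrence of `x`, and `x y x = x² y` moves the
square to the first occurrence. Hence the value of a word depends only on its list of letters in
order of first occurrence, each letter being raised to the power `1` or `2` according to whether it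
is simple or multiple. Under the hypotheses on `u` and `v`, the two lists so obtained are
permutations of one another, and only pairs of multiple letters can occur in opposite orders;
their values are squares, which commute.
-/

section Lists

open scoped List

variable {X : Type*} [DecidableEq X]

theorem min_count_two_eq_two {x : X} {l : List X} (hx : x ∈ l) (h : l.count x ≠ 1) :
    min (l.count x) 2 = 2 := by
  have := List.count_pos_iff.2 hx
  lia

-- The filter predicate is spelled as in `List.eraseDups_cons`.
theorem filter_ne_induction {P : List X → Prop} (nil : P [])
    (cons : ∀ a l, P (l.filter fun b ↦ !b == a) → P (a :: l)) : ∀ l, P l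
  | [] => nil
  | a :: l => cons a l (filter_ne_induction nil cons (l.filter fun b ↦ !b == a))
termination_by l => l.length
decreasing_by exact Nat.lt_succ_of_le (l.length_filter_le _)

theorem mem_takeWhile_ne_iff_idxOf_lt {x y : X} {l : List X} :
    x ∈ l.takeWhile (fun a ↦ decide (a ≠ y)) ↔ l.idxOf x < l.idxOf y := by
  induction l with
  | nil => simp
  | cons a l ih => grind [List.takeWhile_cons]

theorem idxOf_lt_idxOf_iff_of_filter_takeWhile_ne_eq {p q : X → Bool} {x y : X} {l₁ l₂ : List X}
    (hp : p x) (hq : q x)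
    (h : (l₁.takeWhile fun a ↦ decide (a ≠ y)).filter p =
      (l₂.takeWhile fun a ↦ decide (a ≠ y)).filter q) :
    l₁.idxOf x < l₁.idxOf y ↔ l₂.idxOf x < l₂.idxOf y := by
  have hmem : x ∈ _ ↔ x ∈ _ := iff_of_eq (congrArg (x ∈ ·) h)
  simpa only [List.mem_filter, hp, hq, and_true, mem_takeWhile_ne_iff_idxOf_lt] using hmem

theorem idxOf_lt_idxOf_of_filter {p : X → Bool} {x y : X} {l : List X} (hy : p y)
    (h : (l.filter p).idxOf x < (l.filter p).idxOf y) : l.idxOf x < l.idxOf y := by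
  induction l with
  | nil => simp at h
  | cons a l ih => grind

-- `List.eraseDups` keeps the first occurrence of each letter, whereas `List.dedup` keeps the last.
theorem pairwise_eraseDups_idxOf_lt (l : List X) :
    l.eraseDups.Pairwise fun x y ↦ l.idxOf x < l.idxOf y := by
  induction l using filter_ne_induction with
  | nil => simp
  | cons a l ih =>
    rw [List.eraseDups_cons, List.pairwise_cons]
    refine ⟨fun y hy ↦ ?_, ih.imp_of_mem fun {x y} hx hy hxy ↦ ?_⟩
    · have hya : y ≠ a := by grind [List.mem_eraseDups]
      rw [List.idxOf_cons_self, List.idxOf_cons_ne _ hya.symm]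
      exact Nat.succ_pos _
    · have hxa : x ≠ a := by grind [List.mem_eraseDups]
      have hya : y ≠ a := by grind [List.mem_eraseDups]
      rw [List.idxOf_cons_ne _ hxa.symm, List.idxOf_cons_ne _ hya.symm]
      exact Nat.succ_lt_succ (idxOf_lt_idxOf_of_filter (by simpa using hya) hxy)

theorem nodup_eraseDups (l : List X) : l.eraseDups.Nodup :=
  (pairwise_eraseDups_idxOf_lt l).imp fun h ↦ by rintro rfl; exact h.false

theorem idxOf_lt_idxOf_of_pair_sublist_eraseDups {x y : X} {l : List X}
    (h : [x, y] <+ l.eraseDups) : l.idxOf x < l.idxOf y :=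
  List.pairwise_iff_forall_sublist.1 (pairwise_eraseDups_idxOf_lt l) h

theorem perm_eraseDups_of_mem_iff {l₁ l₂ : List X} (h : ∀ x, x ∈ l₁ ↔ x ∈ l₂) :
    l₁.eraseDups ~ l₂.eraseDups :=
  (List.perm_ext_iff_of_nodup (nodup_eraseDups l₁) (nodup_eraseDups l₂)).2 fun x ↦ by
    rw [List.mem_eraseDups, List.mem_eraseDups, h]

end Lists

section Monoids

open scoped List

variable {X M : Type*} [Monoid M]

theorem prod_map_eq_of_perm_of_commute_swapped {g : X → M} {l₁ l₂ : List X} (h : l₁ ~ l₂)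
    (hcomm : ∀ x y, [x, y] <+ l₁ → [y, x] <+ l₂ → Commute (g x) (g y)) :
    (l₁.map g).prod = (l₂.map g).prod := by
  induction l₁ generalizing l₂ with
  | nil => rw [h.nil_eq]
  | cons x l₁ ih =>
    obtain ⟨p, q, rfl⟩ := List.append_of_mem (h.subset List.mem_cons_self)
    have hperm : l₁ ~ p ++ q := (h.trans List.perm_middle).cons_inv
    have hsub : p ++ q <+ p ++ x :: q :=
      (List.Sublist.refl p).append (List.sublist_cons_self x q)
    have hxp : Commute (g x) (p.map g).prod := by
      refine Commute.list_prod_right _ _ (List.forall_mem_map.2 fun s hs ↦ hcomm x s ?_ ?_)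
      · exact (List.singleton_sublist.2 (hperm.mem_iff.2 (List.mem_append_left q hs))).cons_cons x
      · exact (List.singleton_sublist.2 hs).append (List.singleton_sublist.2 List.mem_cons_self)
    have hrest : (l₁.map g).prod = ((p ++ q).map g).prod :=
      ih hperm fun y z hy hz ↦ hcomm y z (hy.cons x) (hz.trans hsub)
    simp only [List.map_cons, List.map_append, List.prod_cons, List.prod_append] at hrest ⊢
    rw [hrest, hxp.left_comm]

theorem sq_mul_mul_self {x : M} (hpow : x ^ 2 = x ^ 3) (hxyx : ∀ y, x ^ 2 * y = x * y * x) (y : M) :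
    x ^ 2 * y * x = x ^ 2 * y := by
  calc x ^ 2 * y * x = x * (x * y) * x := by rw [sq, mul_assoc x x y]
    _ = x ^ 2 * (x * y) := (hxyx _).symm
    _ = x ^ 3 * y := by rw [← mul_assoc, ← pow_succ]
    _ = x ^ 2 * y := by rw [← hpow]

variable {f : X → M} {x : X}

theorem mul_prod_map_eq_sq_mul_prod_map_of_mem (hpow : f x ^ 2 = f x ^ 3)
    (hxyx : ∀ y, f x ^ 2 * y = f x * y * f x) {l : List X} (hx : x ∈ l) :
    f x * (l.map f).prod = f x ^ 2 * (l.map f).prod := by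
  obtain ⟨p, q, rfl⟩ := List.append_of_mem hx
  have hp : f x * (p.map f).prod * f x = f x ^ 2 * (p.map f).prod * f x := by
    rw [← hxyx, sq_mul_mul_self hpow hxyx]
  simpa [mul_assoc] using congrArg (· * (q.map f).prod) hp

variable [DecidableEq X]

theorem sq_mul_prod_map_filter_ne (hpow : f x ^ 2 = f x ^ 3)
    (hxyx : ∀ y, f x ^ 2 * y = f x * y * f x) (l : List X) :
    f x ^ 2 * ((l.filter fun b ↦ !b == x).map f).prod = f x ^ 2 * (l.map f).prod := by
  induction l using List.reverseRecOn with
  | nil => rfl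
  | append_singleton l a ih =>
    by_cases hax : a = x
    · subst hax
      simp [ih, ← mul_assoc, sq_mul_mul_self hpow hxyx]
    · simp [hax, ← mul_assoc, ih]

theorem mul_prod_map_eq_pow_mul_prod_map_filter_ne (hpow : f x ^ 2 = f x ^ 3)
    (hxyx : ∀ y, f x ^ 2 * y = f x * y * f x) (l : List X) :
    f x * (l.map f).prod =
      f x ^ min ((x :: l).count x) 2 * ((l.filter fun b ↦ !b == x).map f).prod := by
  by_cases hx : x ∈ l
  · have hcount : (x :: l).count x ≠ 1 := by
      simpa [List.count_cons_self] using List.count_eq_zero.not.2 (not_not.2 hx)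
    rw [min_count_two_eq_two List.mem_cons_self hcount, sq_mul_prod_map_filter_ne hpow hxyx,
      mul_prod_map_eq_sq_mul_prod_map_of_mem hpow hxyx hx]
  · have hfilter : (l.filter fun b ↦ !b == x) = l := by grind [List.filter_eq_self]
    simp [hfilter, List.count_eq_zero_of_not_mem hx]

theorem prod_map_eq_prod_map_eraseDups (hpow : ∀ x, f x ^ 2 = f x ^ 3)
    (hxyx : ∀ x y, f x ^ 2 * y = f x * y * f x) (l : List X) :
    (l.map f).prod = (l.eraseDups.map fun x ↦ f x ^ min (l.count x) 2).prod := by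
  induction l using filter_ne_induction with
  | nil => simp
  | cons a l ih =>
    have hcongr : ((l.filter fun b ↦ !b == a).eraseDups.map fun x ↦
        f x ^ min ((l.filter fun b ↦ !b == a).count x) 2) =
        (l.filter fun b ↦ !b == a).eraseDups.map fun x ↦ f x ^ min ((a :: l).count x) 2 := by
      refine List.map_congr_left fun x hx ↦ ?_
      have hxa : x ≠ a := by grind [List.mem_eraseDups]
      rw [List.count_filter (by simpa using hxa), List.count_cons_of_ne hxa.symm]
    rw [List.map_cons, List.prod_cons, List.eraseDups_cons, List.map_cons, List.prod_cons,
      mul_prod_map_eq_pow_mul_prod_map_filter_ne (hpow a) (hxyx a), ih, hcongr]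

end Monoids

/-- Sufficiency for the word problem of the variety E: a monoid satisfying
x² ≈ x³, x²y ≈ xyx, x²y² ≈ y²x² satisfies every identity u ≈ v such that
sim(u) = sim(v), mul(u) = mul(v), the simple letters appear in the same order in u
and v, and for every letter x the simple letters preceding the first occurrence of x
are the same in u and in v. -/
theorem stmt12 {X : Type*} [DecidableEq X] {M : Type*} [Monoid M]
    (h1 : ∀ x : M, x ^ 2 = x ^ 3)
    (h2 : ∀ x y : M, x ^ 2 * y = x * y * x)
    (h3 : ∀ x y : M, x ^ 2 * y ^ 2 = y ^ 2 * x ^ 2)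
    (u v : List X)
    (hsim : ∀ x : X, u.count x = 1 ↔ v.count x = 1)
    (hmul : ∀ x : X, 2 ≤ u.count x ↔ 2 ≤ v.count x)
    (horder : u.filter (fun a => decide (u.count a = 1)) =
      v.filter (fun a => decide (v.count a = 1)))
    (hrestr : ∀ x ∈ u,
      (u.takeWhile (fun a => decide (a ≠ x))).filter (fun a => decide (u.count a = 1)) =
      (v.takeWhile (fun a => decide (a ≠ x))).filter (fun a => decide (v.count a = 1))) :
    ∀ f : X → M, (u.map f).prod = (v.map f).prod := by
  intro f
  have hcount (x : X) : min (u.count x) 2 = min (v.count x) 2 := by grind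
  have hmem (x : X) : x ∈ u ↔ x ∈ v := by
    rw [← List.count_pos_iff, ← List.count_pos_iff]
    grind
  have hidx (s x : X) (hs : u.count s = 1) (hx : x ∈ u) :
      u.idxOf s < u.idxOf x ↔ v.idxOf s < v.idxOf x :=
    idxOf_lt_idxOf_iff_of_filter_takeWhile_ne_eq (decide_eq_true hs)
      (decide_eq_true ((hsim s).1 hs)) (hrestr x hx)
  have hnormal := prod_map_eq_prod_map_eraseDups (fun x ↦ h1 (f x)) (fun x ↦ h2 (f x))
  rw [hnormal u, hnormal v]
  simp only [← hcount]
  refine prod_map_eq_of_perm_of_commute_swapped (perm_eraseDups_of_mem_iff hmem)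
    fun x y hxy hyx ↦ ?_
  have hxu : x ∈ u := List.mem_eraseDups.1 (hxy.subset (by simp))
  have hyu : y ∈ u := List.mem_eraseDups.1 (hxy.subset (by simp))
  have hlt := idxOf_lt_idxOf_of_pair_sublist_eraseDups hxy
  have hgt := idxOf_lt_idxOf_of_pair_sublist_eraseDups hyx
  have hx : u.count x ≠ 1 := fun h ↦ hgt.asymm ((hidx x y h hyu).1 hlt)
  have hy : u.count y ≠ 1 := fun h ↦ hlt.asymm ((hidx y x h hxu).2 hgt)
  rw [min_count_two_eq_two hxu hx, min_count_two_eq_two hyu hy]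
  exact h3 (f x) (f y)
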